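/- (Core of Theorem 2, acceleration-controlled bicycle.) Let p, v ∈ ℝ² with ‖p‖ > r > 0 and v ≠ 0, let h = ⟨p, v⟩ + ‖v‖·√(‖p‖² − r²), and let κ : ℝ → ℝ satisfy κ(s) ≥ 0 whenever s ≥ 0. If h ≥ 0, then ⟨v, v⟩ + ⟨p, v⟩·‖v‖/√(‖p‖² − r²) + κ(h) ≥ 0. Consequently, on the safe set {h ≥ 0}, whenever the input-dependent part of ḣ vanishes (L_g h = 0), the CBF inequality ḣ + κ(h) ≥ 0 still holds, so h is a valid CBF on the set C = {h ≥ 0}. -/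

import Mathlib

open scoped RealInnerProductSpace

section

variable {E : Type*} [NormedAddCommGroup E] [InnerProductSpace ℝ E]

/-- The collision cone control barrier function `h` for an obstacle of radius `r` at relative
position `p` and relative velocity `v`. It is meaningful only for `|r| ≤ ‖p‖`: inside the obstacle
the square root takes its junk value `0`. -/
noncomputable def collisionConeCBF (r : ℝ) (p v : E) : ℝ :=
  ⟪p, v⟫ + ‖v‖ * √(‖p‖ ^ 2 - r ^ 2)

theorem inner_self_add_inner_mul_norm_div (p v : E) {s : ℝ} (hs : s ≠ 0) :
    ⟪v, v⟫ + ⟪p, v⟫ * ‖v‖ / s = ‖v‖ / s * (⟪p, v⟫ + ‖v‖ * s) := by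
  rw [real_inner_self_eq_norm_sq]
  field_simp
  ring

theorem inner_self_add_inner_mul_norm_div_sqrt_nonneg {p v : E} {r : ℝ} (hp : |r| < ‖p‖)
    (hh : 0 ≤ collisionConeCBF r p v) :
    0 ≤ ⟪v, v⟫ + ⟪p, v⟫ * ‖v‖ / √(‖p‖ ^ 2 - r ^ 2) := by
  have sqrt_pos : 0 < √(‖p‖ ^ 2 - r ^ 2) :=
    Real.sqrt_pos.mpr (sub_pos.mpr (sq_lt_sq.mpr (hp.trans_le (le_abs_self _))))
  rw [inner_self_add_inner_mul_norm_div p v sqrt_pos.ne']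
  exact mul_nonneg (by positivity) hh

theorem c3bf_bicycle_valid_on_safe_set_general {p v : E} {r : ℝ} {κ : ℝ → ℝ} (hp : |r| < ‖p‖)
    (hκ : ∀ s : ℝ, 0 ≤ s → 0 ≤ κ s) (hh : 0 ≤ collisionConeCBF r p v) :
    0 ≤ ⟪v, v⟫ + ⟪p, v⟫ * ‖v‖ / √(‖p‖ ^ 2 - r ^ 2) + κ (collisionConeCBF r p v) :=
  add_nonneg (inner_self_add_inner_mul_norm_div_sqrt_nonneg hp hh) (hκ _ hh)

end

/-- core of Theorem 2, acceleration-controlled bicycle: on the safe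
set `{h ≥ 0}`, with `h = ⟪p,v⟫ + ‖v‖√(‖p‖²−r²)` and `κ` nonnegative on
nonnegative arguments, one has `⟪v,v⟫ + ⟪p,v⟫‖v‖/√(‖p‖²−r²) + κ(h) ≥ 0`. -/
theorem c3bf_bicycle_valid_on_safe_set
    (p v : EuclideanSpace ℝ (Fin 2)) (r : ℝ) (κ : ℝ → ℝ)
    (hr : 0 < r) (hp : r < ‖p‖) (hv : v ≠ 0)
    (hκ : ∀ s : ℝ, 0 ≤ s → 0 ≤ κ s)
    (hh : 0 ≤ ⟪p, v⟫ + ‖v‖ * Real.sqrt (‖p‖ ^ 2 - r ^ 2)) :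
    0 ≤ ⟪v, v⟫ + ⟪p, v⟫ * ‖v‖ / Real.sqrt (‖p‖ ^ 2 - r ^ 2)
        + κ (⟪p, v⟫ + ‖v‖ * Real.sqrt (‖p‖ ^ 2 - r ^ 2)) :=
  c3bf_bicycle_valid_on_safe_set_general ((abs_of_pos hr).trans_lt hp) hκ hh
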